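/- Let n ≥ 3, K a field of prime characteristic p with p ∤ n, and R = K[X_1,...,X_n]/(X_1^n+⋯+X_n^n). Then (x_1⋯x_n)^{n-2} lies in the tight closure of the ideal (x_1^{n-1}, ..., x_n^{n-1}). -/

import Mathlib

/-!
Write `q = p ^ e`, `m = n - 1`, `w = ⌊q / n⌋` and `t = q - w`, so that `n * t ≥ (n - 1) * q`. The
elements `a_i = x_i ^ n` with `1 ≤ i ≤ m` satisfy `∑ a_i = - x_0 ^ n`, so it suffices to work in
the polynomial ring `K[a_1, …, a_m]` with the linear form `L = ∑ a_i`, and to show that every form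
of sufficiently large degree, in particular `(∏ a_i) ^ s * L ^ s` with `n * s > (n - 2) * q`, lies
in the ideal `(a_1 ^ t, …, a_m ^ t, L ^ t)`. The bounded difference between `n * s` and
`(n - 2) * q` is absorbed by the multiplier `c = (x_0 ⋯ x_m) ^ n`, a nonzerodivisor.

The ring `H = K[a] / (a_i ^ t)` is Gorenstein with socle degree `m * (t - 1)`, so the surjectivity
of multiplication by `L ^ t` onto the degree `d` part of `H`, for `d > m * (t - 1) - w`, is dual to
its injectivity in degrees `< w` (`monomial_mem`). For the injectivity (`eq_zero_of_mul_pow_eq`),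
multiply a relation `g * L ^ t = ∑ α_i * a_i ^ t` by `(L * ∏ a_j) ^ w`. Since `t + w = q` and
`L ^ q = ∑ a_i ^ q`, this becomes a relation among the `a_i ^ q` whose coefficients have degree
`< (m + 1) * w ≤ q`, so all of them vanish. Hence `L ^ w` divides `g * (∏ a_j) ^ w`; as `m ≥ 2`,
`L` is prime to every `a_j`, so `L ^ w` divides `g`, which forces `g = 0` for degree reasons.
-/

open MvPolynomial

/-! ### Injectivity of multiplication by a power of the sum of the variables -/

/-- There are no nontrivial relations of degree `< q` among the `X i ^ q`, the Koszul relations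
having coefficients of degree `q`. -/
lemma eq_zero_of_sum_mul_X_pow {K σ : Type*} [Field K] [Fintype σ] {q : ℕ}
    (c : σ → MvPolynomial σ K) (hc : ∀ i, (c i).totalDegree < q)
    (h : ∑ i, c i * X i ^ q = 0) (i : σ) : c i = 0 := by
  classical
  ext ν
  by_contra hν
  have hνs : ν ∈ (c i).support := by simpa [mem_support_iff] using hν
  have hdeg : ∀ j, ν j < q := fun j =>
    lt_of_le_of_lt ((Finsupp.le_degree j ν).trans (le_totalDegree hνs)) (hc i)
  have h1 := congrArg (coeff (ν + Finsupp.single i q)) h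
  rw [coeff_sum, Finset.sum_eq_single i] at h1
  · rw [X_pow_eq_monomial, coeff_mul_monomial, mul_one, coeff_zero] at h1
    exact hν (by simpa using h1)
  · intro j _ hji
    rw [X_pow_eq_monomial, coeff_mul_monomial', if_neg]
    intro hle
    have := hle j
    have := hdeg j
    simp [Ne.symm hji] at *
    omega
  · simp

/-- Two variables are needed: in one variable the sum is `X i` itself. -/
lemma isRelPrime_sum_X_X {K σ : Type*} [Field K] [Fintype σ] [Nontrivial σ] (i : σ) :
    IsRelPrime (∑ j, X j : MvPolynomial σ K) (X i) := by
  classical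
  refine IsRelPrime.symm ?_
  rw [(X_prime (i := i)).irreducible.isRelPrime_iff_not_dvd]
  rintro ⟨r, hr⟩
  -- Evaluate at a coordinate point on the hyperplane `X i = 0`.
  obtain ⟨j, hj⟩ := exists_ne i
  have := congrArg (eval (Pi.single j (1 : K))) hr
  simp [Pi.single_apply, hj.symm] at this

/-- Multiplication by `(∑ X i) ^ t` is injective in degrees `< w` on the quotient of `K[X]` by the
`X i ^ t`, where `t = p ^ k - w`: the step that uses the Frobenius. -/
lemma eq_zero_of_mul_pow_eq {K σ : Type*} [Field K] [Fintype σ] [Nontrivial σ] {p : ℕ}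
    [Fact p.Prime] [CharP K p] {k w t e : ℕ} (htw : t + w = p ^ k)
    (hw : (Fintype.card σ + 1) * w ≤ p ^ k) (he : e < w)
    (g : MvPolynomial σ K) (hg : g.totalDegree ≤ e)
    (α : σ → MvPolynomial σ K) (hα : ∀ i, (α i).totalDegree ≤ e)
    (h : g * (∑ i, X i) ^ t = ∑ i, α i * X i ^ t) : g = 0 := by
  classical
  set L : MvPolynomial σ K := ∑ i, X i with hL
  have hLhom : L.IsHomogeneous 1 := IsHomogeneous.sum _ _ _ fun i _ => isHomogeneous_X K i
  have hL0 : L ≠ 0 := by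
    intro h0
    obtain ⟨j⟩ : Nonempty σ := inferInstance
    have := congrArg (eval (Pi.single j (1 : K))) h0
    simp [hL, Pi.single_apply] at this
  have hprod : ∀ s : Finset σ, (∏ j ∈ s, X j : MvPolynomial σ K).totalDegree ≤ s.card := by
    intro s
    refine (totalDegree_finsetProd _ _).trans ?_
    simp
  -- The coefficients of a relation among the `X i ^ p ^ k`, obtained by multiplying the given
  -- relation by the `w`-th power of `L * ∏ X i`.
  have hc := eq_zero_of_sum_mul_X_pow (q := p ^ k)
    (fun i => g * (∏ j, X j) ^ w - α i * (L * ∏ j ∈ Finset.univ.erase i, X j) ^ w)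
    (by
      intro i
      have hcard : 1 ≤ Fintype.card σ := Fintype.card_pos
      have h1 : (g * (∏ j, X j) ^ w).totalDegree ≤ e + w * Fintype.card σ :=
        (totalDegree_mul _ _).trans (add_le_add hg ((totalDegree_pow _ _).trans
          (Nat.mul_le_mul_left _ (hprod _))))
      have h2 : (α i * (L * ∏ j ∈ Finset.univ.erase i, X j) ^ w).totalDegree
          ≤ e + w * Fintype.card σ := by
        refine (totalDegree_mul _ _).trans (add_le_add (hα i) ((totalDegree_pow _ _).trans
          (Nat.mul_le_mul_left _ ((totalDegree_mul _ _).trans ?_))))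
        have h3 := hprod (Finset.univ.erase i)
        rw [Finset.card_erase_of_mem (Finset.mem_univ i), Finset.card_univ] at h3
        have h4 := hLhom.totalDegree_le
        omega
      refine lt_of_le_of_lt ((totalDegree_sub _ _).trans (max_le h1 h2)) ?_
      nlinarith)
    (by
      have hsum : ∑ i, (X i : MvPolynomial σ K) ^ p ^ k = L ^ p ^ k :=
        (sum_pow_char_pow p k _ _).symm
      have hterm : ∀ i, α i * (L * ∏ j ∈ Finset.univ.erase i, X j) ^ w * X i ^ p ^ k
          = (α i * X i ^ t) * (L * ∏ j, X j) ^ w := by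
        intro i
        rw [← Finset.mul_prod_erase Finset.univ X (Finset.mem_univ i), ← htw]
        ring
      simp only [sub_mul, Finset.sum_sub_distrib, hterm]
      rw [← Finset.mul_sum, ← Finset.sum_mul, hsum, ← h, ← htw]
      ring)
  obtain ⟨i⟩ : Nonempty σ := inferInstance
  have hdvd : L ^ w ∣ g * (∏ j, X j) ^ w := by
    rw [sub_eq_zero.mp (hc i), mul_pow]
    exact ⟨α i * (∏ j ∈ Finset.univ.erase i, X j) ^ w, by ring⟩
  have hrel1 : IsRelPrime L (∏ j, X j : MvPolynomial σ K) :=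
    IsRelPrime.prod_right fun j _ => isRelPrime_sum_X_X j
  have hrel : IsRelPrime (L ^ w) ((∏ j, X j : MvPolynomial σ K) ^ w) := hrel1.pow
  obtain ⟨r, hr⟩ := hrel.dvd_of_dvd_mul_right hdvd
  by_contra hg0
  have hr0 : r ≠ 0 := by rintro rfl; simp [hr] at hg0
  have hLw : L ^ w ≠ 0 := pow_ne_zero _ hL0
  have hd := (hLhom.pow w).totalDegree hLw
  rw [hr, totalDegree_mul_of_isDomain hLw hr0, hd] at hg
  omega

/-! ### Gorenstein duality for monomial complete intersections -/

/-- Membership in the monomial ideal `(X i ^ t)`, with control on the degrees of the coefficients. -/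
lemma exists_eq_sum_mul_X_pow {K σ : Type*} [Field K] [Fintype σ] [Nonempty σ] {t e : ℕ}
    (h : MvPolynomial σ K) (hdeg : h.totalDegree ≤ e + t)
    (hsupp : ∀ ν ∈ h.support, ∃ i, t ≤ ν i) :
    ∃ α : σ → MvPolynomial σ K, (∀ i, (α i).totalDegree ≤ e) ∧ h = ∑ i, α i * X i ^ t := by
  classical
  choose! ι hι using hsupp
  refine ⟨fun i => ∑ ν ∈ h.support.filter (ι · = i),
    monomial (ν - Finsupp.single i t) (coeff ν h), fun i => ?_, ?_⟩
  · refine totalDegree_finsetSum_le fun ν hν => (totalDegree_monomial_le _ _).trans ?_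
    obtain ⟨hνs, rfl⟩ := Finset.mem_filter.mp hν
    have h1 : ν - Finsupp.single (ι ν) t + Finsupp.single (ι ν) t = ν :=
      tsub_add_cancel_of_le (by simpa using hι ν hνs)
    have h2 := congrArg Finsupp.degree h1
    have h3 := le_totalDegree hνs
    simp only [map_add, Finsupp.degree_single] at h2
    change Finsupp.degree _ ≤ e
    change Finsupp.degree ν ≤ _ at h3
    omega
  · conv_lhs => rw [h.as_sum]
    rw [← Finset.sum_fiberwise h.support ι]
    refine Finset.sum_congr rfl fun i _ => ?_
    rw [Finset.sum_mul]
    refine Finset.sum_congr rfl fun ν hν => ?_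
    obtain ⟨hνs, rfl⟩ := Finset.mem_filter.mp hν
    rw [X_pow_eq_monomial, monomial_mul, mul_one,
      tsub_add_cancel_of_le (by simpa using hι ν hνs)]

open Classical in
/-- The polynomial dual to a functional `ψ` in the box of exponents at most `T`: the coefficient of
`X ^ (T - ν)` is `ψ (X ^ ν)`. If `ψ` kills every monomial outside the box, multiplying this
polynomial by `P` corresponds to precomposing `ψ` with multiplication by `P`; this is Gorenstein
duality for `K[X] / (X i ^ (T i + 1))`. -/
noncomputable def inverseSystem {K σ : Type*} [Field K] [Fintype σ] (T : σ →₀ ℕ)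
    (ψ : MvPolynomial σ K →ₗ[K] K) : MvPolynomial σ K :=
  ∑ ν ∈ Finset.Icc 0 T, monomial (T - ν) (ψ (monomial ν 1))

lemma coeff_inverseSystem {K σ : Type*} [Field K] [Fintype σ] {T ν : σ →₀ ℕ}
    (ψ : MvPolynomial σ K →ₗ[K] K) (hν : ν ≤ T) :
    coeff (T - ν) (inverseSystem T ψ) = ψ (monomial ν 1) := by
  classical
  rw [inverseSystem, coeff_sum, Finset.sum_eq_single ν]
  · simp
  · intro κ hκ hne
    rw [coeff_monomial, if_neg]
    intro h
    apply hne
    have h1 := congrArg (T - ·) h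
    simpa only [tsub_tsub_cancel_of_le (Finset.mem_Icc.mp hκ).2,
      tsub_tsub_cancel_of_le hν] using h1
  · simp [hν]

lemma coeff_mul_inverseSystem {K σ : Type*} [Field K] [Fintype σ] {T ρ : σ →₀ ℕ}
    (ψ : MvPolynomial σ K →ₗ[K] K) (hψ : ∀ ν, ¬ ν ≤ T → ψ (monomial ν 1) = 0)
    (hρ : ρ ≤ T) (P : MvPolynomial σ K) :
    coeff (T - ρ) (P * inverseSystem T ψ) = ψ (monomial ρ 1 * P) := by
  classical
  induction P using MvPolynomial.induction_on' with
  | add P Q hP hQ => rw [add_mul, coeff_add, hP, hQ, mul_add, map_add]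
  | monomial κ c =>
    have h1 : (monomial ρ 1 * monomial κ c : MvPolynomial σ K) = c • monomial (ρ + κ) 1 := by
      simp [monomial_mul, smul_monomial]
    rw [coeff_monomial_mul', h1, map_smul, smul_eq_mul]
    split_ifs with hκ
    · have hle : ρ + κ ≤ T := by
        rw [add_comm]; exact (le_tsub_iff_right hρ).mp hκ
      rw [tsub_tsub, coeff_inverseSystem ψ hle]
    · rw [hψ, mul_zero]
      intro hle
      exact hκ ((le_tsub_iff_right hρ).mpr (by rwa [add_comm]))

/-- All monomials of large degree lie in `(X i ^ t) + ((∑ X i) ^ t)`. A functional separating such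
a monomial from this ideal would give, through `inverseSystem`, a nonzero polynomial of degree `< w`
contradicting `eq_zero_of_mul_pow_eq`. -/
lemma monomial_mem {K σ : Type*} [Field K] [Fintype σ] [Nontrivial σ] {p : ℕ}
    [Fact p.Prime] [CharP K p] {k w t : ℕ} (ht : 1 ≤ t) (htw : t + w = p ^ k)
    (hw : (Fintype.card σ + 1) * w ≤ p ^ k) (μ : σ →₀ ℕ)
    (hμ : Fintype.card σ * (t - 1) < μ.degree + w) :
    (monomial μ 1 : MvPolynomial σ K) ∈
      Ideal.span (Set.range fun i : σ => (X i : MvPolynomial σ K) ^ t) ⊔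
        Ideal.span {(∑ i, X i) ^ t} := by
  classical
  set I : Ideal (MvPolynomial σ K) :=
    Ideal.span (Set.range fun i : σ => (X i : MvPolynomial σ K) ^ t) ⊔
        Ideal.span {(∑ i, X i) ^ t} with hI
  set L : MvPolynomial σ K := ∑ i, X i with hL
  have hLt : (L ^ t).IsHomogeneous t := by
    simpa using (IsHomogeneous.sum Finset.univ _ 1 fun i _ => isHomogeneous_X K i).pow t
  have hmon : ∀ ν : σ →₀ ℕ, (∃ i, t ≤ ν i) → (monomial ν 1 : MvPolynomial σ K) ∈ I := by
    rintro ν ⟨i, hi⟩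
    have h1 : (monomial ν 1 : MvPolynomial σ K)
        = monomial (ν - Finsupp.single i t) 1 * X i ^ t := by
      rw [X_pow_eq_monomial, monomial_mul, mul_one,
        tsub_add_cancel_of_le (by simpa using hi)]
    rw [h1]
    exact I.mul_mem_left _ (Ideal.mem_sup_left (Ideal.subset_span ⟨i, rfl⟩))
  by_contra hnot
  obtain ⟨φ, hφμ, hφI⟩ := Submodule.exists_dual_map_eq_bot_of_notMem
    (p := I.restrictScalars K) (x := monomial μ (1 : K)) hnot inferInstance
  have hφ : ∀ P ∈ I, φ P = 0 := by
    intro P hP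
    have : φ P ∈ (I.restrictScalars K).map φ := Submodule.mem_map_of_mem hP
    rwa [hφI, Submodule.mem_bot] at this
  -- Only the part of `φ` in degree `|μ|` matters.
  set ψ : MvPolynomial σ K →ₗ[K] K := φ ∘ₗ homogeneousComponent μ.degree with hψdef
  have hψmon : ∀ ν : σ →₀ ℕ, ψ (monomial ν 1)
      = if ν.degree = μ.degree then φ (monomial ν 1) else 0 := by
    intro ν
    have := homogeneousComponent_of_mem (m := μ.degree) (isHomogeneous_monomial (1 : K) (d := ν) rfl)
    simp only [hψdef, LinearMap.comp_apply, this, eq_comm (a := ν.degree)]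
    split_ifs <;> simp
  have hψL : ∀ ρ : σ →₀ ℕ, ψ (monomial ρ 1 * L ^ t) = 0 := by
    intro ρ
    have := homogeneousComponent_of_mem (m := μ.degree)
      ((isHomogeneous_monomial (1 : K) (d := ρ) rfl).mul hLt)
    simp only [hψdef, LinearMap.comp_apply, this]
    split_ifs
    · exact hφ _ (I.mul_mem_left _ (Ideal.mem_sup_right (Ideal.mem_span_singleton_self _)))
    · simp
  set T : σ →₀ ℕ := Finsupp.equivFunOnFinite.symm fun _ => t - 1 with hT
  have hTdeg : T.degree = Fintype.card σ * (t - 1) := by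
    simp [Finsupp.degree_eq_sum, hT]
  have hnle : ∀ ν : σ →₀ ℕ, ¬ ν ≤ T → ∃ i, t ≤ ν i := by
    intro ν h
    rw [Finsupp.le_def] at h
    push Not at h
    obtain ⟨i, hi⟩ := h
    refine ⟨i, ?_⟩
    simp [hT] at hi
    omega
  have hψT : ∀ ν, ¬ ν ≤ T → ψ (monomial ν 1) = 0 := by
    intro ν h
    rw [hψmon, hφ _ (hmon ν (hnle ν h)), ite_self]
  have hμT : μ ≤ T := by
    by_contra h
    exact hnot (hmon μ (hnle μ h))
  set g := inverseSystem T ψ with hgdef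
  have hgdeg : g.totalDegree ≤ T.degree - μ.degree := by
    refine totalDegree_finsetSum_le fun ν hν => ?_
    rw [hψmon]
    split_ifs with hd
    · refine (totalDegree_monomial_le _ _).trans ?_
      have h1 := congrArg Finsupp.degree (tsub_add_cancel_of_le ((Finset.mem_Icc.mp hν).2))
      rw [map_add] at h1
      change Finsupp.degree _ ≤ _
      omega
    · simp
  have hLdeg := hLt.totalDegree_le
  obtain ⟨α, hα, hαeq⟩ := exists_eq_sum_mul_X_pow (t := t) (g * L ^ t)
    ((totalDegree_mul _ _).trans (add_le_add hgdeg hLdeg)) (by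
      intro ν hν
      apply hnle
      intro hle
      rw [mem_support_iff, ← tsub_tsub_cancel_of_le hle, mul_comm, hgdef,
        coeff_mul_inverseSystem ψ hψT tsub_le_self] at hν
      exact hν (hψL _))
  have hμle : μ.degree ≤ T.degree := Finsupp.degree_mono hμT
  have hg0 := eq_zero_of_mul_pow_eq htw hw (by omega) g hgdeg α hα hαeq
  apply hφμ
  have := coeff_inverseSystem ψ hμT
  rw [← hgdef, hg0, coeff_zero, hψmon, if_pos rfl] at this
  exact this.symm

lemma mem_of_isHomogeneous {K σ : Type*} [Field K] [Fintype σ] [Nontrivial σ] {p : ℕ}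
    [Fact p.Prime] [CharP K p] {k w t d : ℕ} (ht : 1 ≤ t) (htw : t + w = p ^ k)
    (hw : (Fintype.card σ + 1) * w ≤ p ^ k) (hd : Fintype.card σ * (t - 1) < d + w)
    {P : MvPolynomial σ K} (hP : P.IsHomogeneous d) :
    P ∈ Ideal.span (Set.range fun i : σ => (X i : MvPolynomial σ K) ^ t) ⊔
        Ideal.span {(∑ i, X i) ^ t} := by
  rw [P.as_sum]
  refine Ideal.sum_mem _ fun ν hν => ?_
  have hdeg : ν.degree = d := by
    by_contra h
    exact mem_support_iff.mp hν (hP.coeff_eq_zero h)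
  rw [← mul_one (coeff ν P), ← C_mul_monomial]
  exact Ideal.mul_mem_left _ _ (monomial_mem ht htw hw ν (by rwa [hdeg]))

/-! ### The Fermat hypersurface -/

/-- `X i` is prime and does not divide the Fermat form, so its image is a nonzerodivisor. -/
lemma mem_nonZeroDivisors_image_X {K : Type*} [Field K] {n : ℕ} (hn : 2 ≤ n)
    {R : Type*} [CommRing R]
    (f : MvPolynomial (Fin n) K →+* R) (hf : Function.Surjective f)
    (hker : RingHom.ker f = Ideal.span {∑ i : Fin n, X i ^ n}) (i : Fin n) :
    f (X i) ∈ nonZeroDivisors R := by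
  rw [mem_nonZeroDivisors_iff_right]
  intro z hz
  obtain ⟨h, rfl⟩ := hf z
  rw [← map_mul, ← RingHom.mem_ker, hker, Ideal.mem_span_singleton] at hz
  obtain ⟨k, hk⟩ := hz
  have hX : Prime (X i : MvPolynomial (Fin n) K) := X_prime
  rw [← RingHom.mem_ker, hker, Ideal.mem_span_singleton]
  have hdvd : X i ∣ (∑ i : Fin n, X i ^ n : MvPolynomial (Fin n) K) * k := hk ▸ dvd_mul_left _ _
  rcases hX.dvd_or_dvd hdvd with ⟨r, hr⟩ | ⟨r, rfl⟩
  · exfalso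
    have : Nontrivial (Fin n) := Fin.nontrivial_iff_two_le.mpr hn
    obtain ⟨j, hj⟩ := exists_ne i
    have := congrArg (eval (Pi.single j (1 : K))) hr
    simp [Pi.single_apply, hj.symm, ite_pow, zero_pow (show n ≠ 0 by omega)] at this
  · exact ⟨r, mul_right_cancel₀ hX.ne_zero (hk.trans (by ring))⟩

theorem stmt_16 (K : Type*) [Field K] (p n : ℕ) [Fact p.Prime] [CharP K p]
    (hn : 3 ≤ n) (hpn : ¬ p ∣ n)
    (R : Type*) [CommRing R]
    (f : MvPolynomial (Fin n) K →+* R) (hf : Function.Surjective f)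
    (hker : RingHom.ker f = Ideal.span {∑ i : Fin n, X i ^ n})
    (x : Fin n → R) (hx : ∀ i, x i = f (X i)) :
    ∃ c : R, (∀ P ∈ minimalPrimes R, c ∉ P) ∧
      ∃ E : ℕ, ∀ e ≥ E,
        c * ((∏ i, x i) ^ (n - 2)) ^ p ^ e ∈
          Ideal.span (Set.range fun i : Fin n => (x i ^ (n - 1)) ^ p ^ e) := by
  refine ⟨(∏ i, x i) ^ n, fun P hP hmem => ?_, 0, fun e _ => ?_⟩
  · refine notMem_nonZeroDivisors_of_mem_mem_minimalPrimes hmem hP (pow_mem (prod_mem ?_) _)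
    intro i _
    rw [hx]
    exact mem_nonZeroDivisors_image_X (by omega) f hf hker i
  obtain ⟨m, rfl⟩ : ∃ m, n = m + 1 := ⟨n - 1, by omega⟩
  have hsum0 : ∑ i, x i ^ (m + 1) = 0 := by
    have : (∑ i : Fin (m + 1), X i ^ (m + 1) : MvPolynomial (Fin (m + 1)) K) ∈ RingHom.ker f := by
      rw [hker]; exact Ideal.mem_span_singleton_self _
    simpa [RingHom.mem_ker, hx] using this
  set J := Ideal.span (Set.range fun i : Fin (m + 1) => (x i ^ (m + 1 - 1)) ^ p ^ e) with hJ
  have hq : 0 < p ^ e := pow_pos (Fact.out (p := p.Prime)).pos e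
  set q := p ^ e with hqdef
  have : Nontrivial (Fin m) := Fin.nontrivial_iff_two_le.mpr (by omega)
  -- `t` is the least integer with `(m + 1) * t ≥ m * q`, and `s` the least integer with
  -- `(m + 1) * s > (m - 1) * q`.
  set w := q / (m + 1) with hwdef
  have hw1 : (m + 1) * w ≤ q := Nat.mul_div_le q (m + 1)
  have hw2 : q < (m + 1) * w + (m + 1) := Nat.lt_mul_div_succ q (by omega)
  obtain ⟨t, ht⟩ : ∃ t, t + w = q := ⟨q - w, Nat.sub_add_cancel (Nat.div_le_self _ _)⟩
  have ht1 : 1 ≤ t := by nlinarith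
  set s := (m - 1) * q / (m + 1) + 1 with hsdef
  have hs1 : (m - 1) * q < (m + 1) * s := Nat.lt_mul_div_succ _ (by omega)
  have hs2 : (m + 1) * s ≤ (m - 1) * q + (m + 1) := by
    have := Nat.mul_div_le ((m - 1) * q) (m + 1)
    rw [hsdef, mul_add, mul_one]; omega
  obtain ⟨l, rfl⟩ : ∃ l, m = l + 1 := ⟨m - 1, by omega⟩
  obtain ⟨t', rfl⟩ : ∃ t', t = t' + 1 := ⟨t - 1, by omega⟩
  simp only [Nat.add_sub_cancel] at *
  have hP : ((∏ i, X i) ^ s * (∑ i, X i) ^ s : MvPolynomial (Fin (l + 1)) K).IsHomogeneous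
      ((l + 1 + 1) * s) := by
    have h1 := (IsHomogeneous.prod Finset.univ (fun i : Fin (l + 1) => (X i : MvPolynomial _ K))
      (fun _ => 1) fun i _ => isHomogeneous_X K i).pow s
    have h2 := (IsHomogeneous.sum Finset.univ (fun i : Fin (l + 1) => (X i : MvPolynomial _ K))
      1 fun i _ => isHomogeneous_X K i).pow s
    convert h1.mul h2 using 1
    simp; ring
  have hmem := mem_of_isHomogeneous (k := e) (w := w) (t := t' + 1) ht1 ht (by simpa using hw1)
    (by
      simp only [Fintype.card_fin, Nat.add_sub_cancel]
      nlinarith) hP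
  set Ψ : MvPolynomial (Fin (l + 1)) K →+* R := f.comp
    (aeval (R := K) fun i : Fin (l + 1) =>
      (X i.succ ^ (l + 1 + 1) : MvPolynomial (Fin (l + 1 + 1)) K)).toRingHom with hΨ
  have hΨX : ∀ i, Ψ (X i) = x i.succ ^ (l + 1 + 1) := by
    intro i; simp [hΨ, hx]
  have hΨL : Ψ (∑ i, X i) = - x 0 ^ (l + 1 + 1) := by
    rw [Fin.sum_univ_succ] at hsum0
    rw [map_sum]
    simp only [hΨX]
    linear_combination hsum0
  have hgen : ∀ i, (x i ^ (l + 1 + 1)) ^ (t' + 1) ∈ J := by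
    intro i
    have h1 : (x i ^ (l + 1)) ^ q ∈ J := Ideal.subset_span ⟨i, rfl⟩
    have h2 : (l + 1) * q ≤ (l + 1 + 1) * (t' + 1) := by nlinarith
    rw [← pow_mul] at h1 ⊢
    exact Ideal.mem_of_dvd J (pow_dvd_pow _ h2) h1
  have hΨP : Ψ ((∏ i, X i) ^ s * (∑ i, X i) ^ s) ∈ J := by
    refine (Ideal.map_le_iff_le_comap.mp ?_ : _ ≤ J.comap Ψ) hmem
    rw [Ideal.map_sup, Ideal.map_span, Ideal.map_span, sup_le_iff, Ideal.span_le, Ideal.span_le]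
    constructor
    · rintro _ ⟨_, ⟨i, rfl⟩, rfl⟩
      simpa [hΨX] using hgen i.succ
    · rintro _ ⟨_, rfl, rfl⟩
      rw [map_pow, hΨL, neg_pow]
      exact J.mul_mem_left _ (hgen 0)
  have hval : Ψ ((∏ i, X i) ^ s * (∑ i, X i) ^ s)
      = (-1) ^ s * (∏ i, x i) ^ ((l + 1 + 1) * s) := by
    rw [map_mul, map_pow, map_pow, hΨL, map_prod, Fin.prod_univ_succ x]
    simp only [hΨX, Finset.prod_pow]
    rw [neg_pow]
    ring
  rw [hval, Ideal.unit_mul_mem_iff_mem J ((isUnit_one.neg).pow s)] at hΨP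
  rw [← pow_mul, ← pow_add]
  refine Ideal.mem_of_dvd J (pow_dvd_pow _ ?_) hΨP
  have : l + 1 + 1 - 2 = l := by omega
  rw [this]
  omega
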